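/- arXiv:1709.01172 — 2 statements merged into one kernel-verified Lean document; each statement's English description precedes it below -/
import Mathlib

section
/- There exist constants c > 1 and C > 0 such that the set of primes p possessing no prime primitive root q ≤ C · (log p)^c has relative density zero in the primes; that is, (#{p ≤ x : p prime and no prime q ≤ C (log p)^c is a primitive root modulo p}) / π(x) → 0 as x → ∞, where π(x) is the number of primes up to x. -/
open Finset
open scoped Classical

/-!
Möbius inversion expands the indicator function of the generators of `(ℤ/pℤ)ˣ` in characters. If
no prime `q ≤ Y < p` is a primitive root modulo `p`, this forces some nontrivial character modulo
`p` to have a sum over the primes up to `Y` of absolute value at least `π(Y) / τ(p - 1) ^ 2`. The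
`k`-th power of such a sum is a character sum of length `Y ^ k` whose coefficients are bounded by
`k ^ k`, and products of characters to distinct prime moduli are nearly orthogonal, so by duality
only few `p ≤ x` with `τ(p - 1)` small can have such a character. The primes with `τ(p - 1)` large
are rare because `τ` is logarithmic on average. With `l ≈ log₂ x`, take `Y = l ^ 128` and call
`τ(p - 1)` small if it is at most `l ^ 3`; the power `k` is such that `l ^ (28 * k) ≈ x`.
-/

section Generators

open scoped ArithmeticFunction.Moebius

theorem sum_moebius_mul_ite_pow_eq_one {G K : Type*} [Monoid G] [Ring K] (u : G) {n : ℕ}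
    (hn : 0 < n) :
    ∑ x ∈ n.divisorsAntidiagonal, (μ x.1 : K) * (if u ^ x.2 = 1 then 1 else 0) =
      if orderOf u = n then 1 else 0 := by
  refine (ArithmeticFunction.sum_eq_iff_sum_mul_moebius_eq
    (f := fun m ↦ if orderOf u = m then (1 : K) else 0)
    (g := fun m ↦ if u ^ m = 1 then 1 else 0)).1 (fun m hm ↦ ?_) n hn
  simp only [sum_ite_eq, Nat.mem_divisors, orderOf_dvd_iff_pow_eq_one, hm.ne', ne_eq,
    not_false_eq_true, and_true]

theorem sum_moebius_div_eq_totient_div {K : Type*} [Field K] [CharZero K] {n : ℕ} (hn : 0 < n) :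
    ∑ x ∈ n.divisorsAntidiagonal, (μ x.1 : K) / x.1 = (n.totient : K) / n := by
  have inversion : ∑ x ∈ n.divisorsAntidiagonal, (μ x.1 : K) * (x.2 : K) = n.totient :=
    (ArithmeticFunction.sum_eq_iff_sum_mul_moebius_eq
      (f := fun m ↦ (m.totient : K)) (g := fun m ↦ (m : K))).1
      (fun m _ ↦ by rw [← Nat.cast_sum, Nat.sum_totient]) n hn
  rw [← inversion, sum_div]
  refine sum_congr rfl fun x hx ↦ ?_
  obtain ⟨hx, hn0⟩ := Nat.mem_divisorsAntidiagonal.1 hx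
  have hx2 : (x.2 : K) ≠ 0 := by
    exact_mod_cast right_ne_zero_of_mul (hx.trans_ne hn0)
  rw [← hx, Nat.cast_mul, mul_div_mul_right _ _ hx2]

theorem le_card_divisors_mul_totient (n : ℕ) : n ≤ #n.divisors * n.totient := by
  calc n = ∑ d ∈ n.divisors, d.totient := (Nat.sum_totient n).symm
    _ ≤ #n.divisors • n.totient := sum_le_card_nsmul _ _ _ fun d hd ↦
        Nat.le_of_dvd (Nat.totient_pos.2 (Nat.pos_of_ne_zero (Nat.ne_zero_of_mem_divisors hd)))
          (Nat.totient_dvd_of_dvd (Nat.dvd_of_mem_divisors hd))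

theorem geom_sum_eq_ite_of_pow_eq_one {K : Type*} [DivisionRing K] {z : K} {d : ℕ}
    (hz : z ^ d = 1) : ∑ j ∈ range d, z ^ j = if z = 1 then (d : K) else 0 := by
  split_ifs with h
  · simp [h]
  · rw [geom_sum_eq h, hz, sub_self, zero_div]

variable {R : Type*} [CommMonoid R]

theorem norm_sum_powers_mulChar_sub_card_le {ι : Type*} (s : Finset ι) (u : ι → Rˣ)
    {E : ℝ} (hE0 : 0 ≤ E) (hE : ∀ χ : MulChar R ℂ, χ ≠ 1 → ‖∑ i ∈ s, χ (u i)‖ ≤ E)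
    (ψ : MulChar R ℂ) {d m : ℕ} (hdm : d * m = orderOf ψ) (hd : d ≠ 0) (hm : m ≠ 0) :
    ‖∑ j ∈ range d, ∑ i ∈ s, (ψ ^ (m * j)) (u i) - #s‖ ≤ d * E := by
  obtain ⟨e, rfl⟩ := Nat.exists_eq_succ_of_ne_zero hd
  have trivial_term : ∑ i ∈ s, (ψ ^ (m * 0)) (u i) = #s := by
    simp only [mul_zero, pow_zero, MulChar.one_apply_coe, sum_const, nsmul_one]
  have nontrivial_term : ∀ j ∈ range e, ‖∑ i ∈ s, (ψ ^ (m * (j + 1))) (u i)‖ ≤ E :=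
    fun j hj ↦ hE _ <| pow_ne_one_of_lt_orderOf (mul_ne_zero hm j.succ_ne_zero) <| by
      rw [← hdm, mul_comm m]
      exact Nat.mul_lt_mul_of_pos_right (by simpa using hj) (Nat.pos_of_ne_zero hm)
  rw [sum_range_succ', trivial_term, add_sub_cancel_right]
  calc ‖∑ j ∈ range e, ∑ i ∈ s, (ψ ^ (m * (j + 1))) (u i)‖ ≤ ∑ _j ∈ range e, E :=
        norm_sum_le_of_le _ nontrivial_term
    _ = e * E := by simp
    _ ≤ e.succ * E := by gcongr; exact e.le_succ

variable [Finite R] [IsCyclic Rˣ]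

variable (R) in
theorem exists_mulChar_orderOf_eq_card_units : ∃ ψ : MulChar R ℂ, orderOf ψ = Nat.card Rˣ := by
  obtain ⟨e⟩ := MulChar.mulEquiv_units R ℂ
  obtain ⟨g, hg⟩ := IsCyclic.exists_generator (α := Rˣ)
  exact ⟨e.symm g, by rw [MulEquiv.orderOf_eq, orderOf_eq_card_of_forall_mem_zpowers hg]⟩

theorem mulChar_apply_eq_one_iff {ψ : MulChar R ℂ} (hψ : orderOf ψ = Nat.card Rˣ) (u : Rˣ) :
    ψ u = 1 ↔ u = 1 := by
  refine ⟨fun hu ↦ ?_, fun hu ↦ by simp [hu]⟩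
  obtain ⟨g, hg⟩ := IsCyclic.exists_generator (α := Rˣ)
  obtain ⟨m, rfl⟩ := mem_powers_iff_mem_zpowers.2 (hg u)
  have hψm : ψ ^ m = 1 := by
    rw [MulChar.eq_iff hg, MulChar.pow_apply_coe, MulChar.one_apply_coe, ← map_pow]
    exact_mod_cast hu
  exact orderOf_dvd_iff_pow_eq_one.1 <| by
    rw [orderOf_eq_card_of_forall_mem_zpowers hg, ← hψ]
    exact orderOf_dvd_of_pow_eq_one hψm

theorem ite_orderOf_eq_card_eq_sum_mulChar {ψ : MulChar R ℂ} (hψ : orderOf ψ = Nat.card Rˣ)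
    (u : Rˣ) :
    (if orderOf u = Nat.card Rˣ then 1 else 0 : ℂ) = ∑ x ∈ (Nat.card Rˣ).divisorsAntidiagonal,
      (μ x.1 : ℂ) / x.1 * ∑ j ∈ range x.1, (ψ ^ (x.2 * j)) u := by
  rw [← sum_moebius_mul_ite_pow_eq_one u Nat.card_pos]
  refine sum_congr rfl fun x hx ↦ ?_
  obtain ⟨hx, hn⟩ := Nat.mem_divisorsAntidiagonal.1 hx
  have hx1 : (x.1 : ℂ) ≠ 0 := by
    exact_mod_cast left_ne_zero_of_mul (hx.trans_ne hn)
  have hroot : (ψ u ^ x.2) ^ x.1 = 1 := by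
    rw [← pow_mul, mul_comm, hx, ← map_pow, ← Units.val_pow_eq_pow_val, pow_card_eq_one']
    simp
  have hfaithful : ψ u ^ x.2 = 1 ↔ u ^ x.2 = 1 := by
    rw [← mulChar_apply_eq_one_iff hψ, Units.val_pow_eq_pow_val, map_pow]
  simp only [MulChar.pow_apply_coe, pow_mul, geom_sum_eq_ite_of_pow_eq_one hroot, hfaithful]
  split_ifs
  · rw [mul_one, div_mul_cancel₀ _ hx1]
  · simp only [mul_zero]

theorem card_orderOf_eq_card_eq_sum_mulChar {ι : Type*} {ψ : MulChar R ℂ}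
    (hψ : orderOf ψ = Nat.card Rˣ) (s : Finset ι) (u : ι → Rˣ) :
    (#{i ∈ s | orderOf (u i) = Nat.card Rˣ} : ℂ) = ∑ x ∈ (Nat.card Rˣ).divisorsAntidiagonal,
      (μ x.1 : ℂ) / x.1 * ∑ j ∈ range x.1, ∑ i ∈ s, (ψ ^ (x.2 * j)) (u i) := by
  rw [natCast_card_filter, sum_congr rfl fun i _ ↦ ite_orderOf_eq_card_eq_sum_mulChar hψ (u i),
    sum_comm]
  exact sum_congr rfl fun x _ ↦ by rw [← mul_sum, sum_comm]

theorem norm_card_orderOf_eq_card_sub_le {ι : Type*} (s : Finset ι) (u : ι → Rˣ) {E : ℝ}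
    (hE0 : 0 ≤ E) (hE : ∀ χ : MulChar R ℂ, χ ≠ 1 → ‖∑ i ∈ s, χ (u i)‖ ≤ E) :
    ‖(#{i ∈ s | orderOf (u i) = Nat.card Rˣ} : ℂ) -
        ((Nat.card Rˣ).totient : ℂ) / Nat.card Rˣ * #s‖ ≤ #(Nat.card Rˣ).divisors * E := by
  obtain ⟨ψ, hψ⟩ := exists_mulChar_orderOf_eq_card_units R
  rw [card_orderOf_eq_card_eq_sum_mulChar hψ, ← sum_moebius_div_eq_totient_div Nat.card_pos,
    sum_mul, ← sum_sub_distrib, ← nsmul_eq_mul, ← sum_const,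
    ← Nat.sum_divisorsAntidiagonal fun _ _ ↦ E]
  refine norm_sum_le_of_le _ fun x hx ↦ ?_
  obtain ⟨hx, hn⟩ := Nat.mem_divisorsAntidiagonal.1 hx
  obtain ⟨hx1, hx2⟩ := mul_ne_zero_iff.1 (hx.trans_ne hn)
  have hμ : ‖(μ x.1 : ℂ)‖ ≤ 1 := by
    rw [Complex.norm_intCast]
    exact_mod_cast ArithmeticFunction.abs_moebius_le_one
  rw [← mul_sub, norm_mul, norm_div, Complex.norm_natCast]
  calc ‖(μ x.1 : ℂ)‖ / x.1 * ‖∑ j ∈ range x.1, ∑ i ∈ s, (ψ ^ (x.2 * j)) (u i) - #s‖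
      ≤ 1 / x.1 * (x.1 * E) := by
        gcongr
        exact norm_sum_powers_mulChar_sub_card_le s u hE0 hE ψ (hx.trans hψ.symm) hx1 hx2
    _ = E := by field_simp

theorem exists_mulChar_ne_one_card_le_of_orderOf_ne_card {ι : Type*} {s : Finset ι}
    (hs : s.Nonempty) {a : ι → R} (ha : ∀ i ∈ s, IsUnit (a i))
    (hord : ∀ i ∈ s, orderOf (a i) ≠ Nat.card Rˣ) :
    ∃ χ : MulChar R ℂ, χ ≠ 1 ∧
      (#s : ℝ) ≤ (#(Nat.card Rˣ).divisors : ℝ) ^ 2 * ‖∑ i ∈ s, χ (a i)‖ := by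
  choose! u hu using ha
  simp only [sum_congr rfl fun i hi ↦ congrArg _ (hu i hi).symm]
  replace hord : ∀ i ∈ s, orderOf (u i) ≠ Nat.card Rˣ := fun i hi ↦ by
    simpa only [← hu i hi, orderOf_units] using hord i hi
  have hnontrivial : {χ : MulChar R ℂ | χ ≠ 1}.Nonempty := by
    obtain ⟨i, hi⟩ := hs
    obtain ⟨ψ, hψ⟩ := exists_mulChar_orderOf_eq_card_units R
    refine ⟨ψ, fun h ↦ hord i hi ?_⟩
    rw [h, orderOf_one] at hψ
    exact Nat.dvd_antisymm (orderOf_dvd_natCard _) (hψ ▸ one_dvd _)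
  obtain ⟨χ, hχ, hmax⟩ := Set.exists_max_image {χ : MulChar R ℂ | χ ≠ 1}
    (fun χ ↦ ‖∑ i ∈ s, χ (u i)‖) (Set.toFinite _) hnontrivial
  refine ⟨χ, hχ, ?_⟩
  have hbound := norm_card_orderOf_eq_card_sub_le s u (norm_nonneg _) hmax
  rw [filter_false_of_mem hord, card_empty, Nat.cast_zero, zero_sub, norm_neg, norm_mul, norm_div]
    at hbound
  simp only [Complex.norm_natCast] at hbound
  set n := Nat.card Rˣ
  have hn : (0 : ℝ) < n := by exact_mod_cast Nat.card_pos
  have htot : (n : ℝ) ≤ #n.divisors * n.totient := by exact_mod_cast le_card_divisors_mul_totient n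
  calc (#s : ℝ) = n / n * #s := by rw [div_self hn.ne', one_mul]
    _ ≤ #n.divisors * n.totient / n * #s := by gcongr
    _ = #n.divisors * (n.totient / n * #s) := by ring
    _ ≤ #n.divisors * (#n.divisors * ‖∑ i ∈ s, χ (u i)‖) := by gcongr
    _ = (#n.divisors : ℝ) ^ 2 * ‖∑ i ∈ s, χ (u i)‖ := by ring

end Generators

section LargeSieve

open scoped ComplexConjugate InnerProductSpace

theorem norm_sum_smul_sq_le {𝕜 E ι : Type*} [RCLike 𝕜] [SeminormedAddCommGroup E]
    [InnerProductSpace 𝕜 E] (s : Finset ι) (v : ι → E) {c : ι → 𝕜} (hc : ∀ i, ‖c i‖ = 1) :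
    ‖∑ i ∈ s, c i • v i‖ ^ 2 ≤ ∑ i ∈ s, ∑ j ∈ s, ‖⟪v i, v j⟫_𝕜‖ := by
  rw [sq, ← inner_self_eq_norm_mul_norm (𝕜 := 𝕜), inner_self_re_eq_norm, sum_inner]
  refine norm_sum_le_of_le _ fun i _ ↦ ?_
  rw [inner_sum]
  refine norm_sum_le_of_le _ fun j _ ↦ ?_
  rw [inner_smul_left, inner_smul_right, norm_mul, norm_mul, RCLike.norm_conj, hc, hc, one_mul,
    one_mul]

/-- The Halász–Montgomery inequality. -/
theorem sum_norm_inner_sq_le {𝕜 E ι : Type*} [RCLike 𝕜] [SeminormedAddCommGroup E]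
    [InnerProductSpace 𝕜 E] (s : Finset ι) (v : ι → E) (w : E) :
    (∑ i ∈ s, ‖⟪w, v i⟫_𝕜‖) ^ 2 ≤ ‖w‖ ^ 2 * ∑ i ∈ s, ∑ j ∈ s, ‖⟪v i, v j⟫_𝕜‖ := by
  choose c hc hcv using fun i ↦ RCLike.exists_norm_eq_mul_self ⟪w, v i⟫_𝕜
  have hsum : ((∑ i ∈ s, ‖⟪w, v i⟫_𝕜‖ : ℝ) : 𝕜) = ⟪w, ∑ i ∈ s, c i • v i⟫_𝕜 := by
    simp only [RCLike.ofReal_sum, inner_sum, inner_smul_right, hcv]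
  calc (∑ i ∈ s, ‖⟪w, v i⟫_𝕜‖) ^ 2 = ‖⟪w, ∑ i ∈ s, c i • v i⟫_𝕜‖ ^ 2 := by
        rw [← hsum, RCLike.norm_ofReal, sq_abs]
    _ ≤ (‖w‖ * ‖∑ i ∈ s, c i • v i‖) ^ 2 := by gcongr; exact norm_inner_le_norm _ _
    _ = ‖w‖ ^ 2 * ‖∑ i ∈ s, c i • v i‖ ^ 2 := mul_pow _ _ _
    _ ≤ ‖w‖ ^ 2 * ∑ i ∈ s, ∑ j ∈ s, ‖⟪v i, v j⟫_𝕜‖ := by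
        gcongr; exact norm_sum_smul_sq_le s v hc

theorem norm_sum_range_le_of_norm_le_one {E : Type*} [SeminormedAddCommGroup E] {g : ℕ → E}
    (hg : ∀ n, ‖g n‖ ≤ 1) (M : ℕ) : ‖∑ n ∈ range M, g n‖ ≤ M := by
  simpa using norm_sum_le_of_le (range M) fun n _ ↦ hg n

theorem norm_sum_range_le_of_periodic {E : Type*} [SeminormedAddCommGroup E] {g : ℕ → E} {m : ℕ}
    (hm : 0 < m) (hper : g.Periodic m) (hzero : ∑ n ∈ range m, g n = 0)
    (hg : ∀ n, ‖g n‖ ≤ 1) (M : ℕ) : ‖∑ n ∈ range M, g n‖ ≤ m := by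
  induction M using Nat.strong_induction_on with
  | _ M ih =>
    rcases lt_or_ge M m with hMm | hmM
    · exact (norm_sum_range_le_of_norm_le_one hg M).trans (by exact_mod_cast hMm.le)
    · obtain ⟨M, rfl⟩ := Nat.exists_eq_add_of_le hmM
      rw [sum_range_add, hzero, zero_add]
      simp only [add_comm m _, hper _]
      exact ih M (by omega)

theorem sum_range_mul_eq_sum_zmod_prod {A : Type*} [AddCommMonoid A] {N N' : ℕ} [NeZero N]
    [NeZero N'] (hNN' : N.Coprime N') (f : ZMod N × ZMod N' → A) :
    ∑ n ∈ range (N * N'), f (n, n) = ∑ z, f z := by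
  have : NeZero (N * N') := ⟨mul_ne_zero (NeZero.ne N) (NeZero.ne N')⟩
  let crt := ZMod.chineseRemainder hNN'
  have crt_natCast (n : ℕ) : crt n = ((n : ZMod N), (n : ZMod N')) := map_natCast crt n
  refine sum_nbij' (fun n ↦ ((n : ZMod N), (n : ZMod N'))) (fun z ↦ (crt.symm z).val)
    (fun _ _ ↦ mem_univ _) (fun z _ ↦ mem_range.2 (ZMod.val_lt _)) (fun n hn ↦ ?_) (fun z _ ↦ ?_)
    (fun _ _ ↦ rfl)
  · rw [← crt_natCast, crt.symm_apply_apply, ZMod.val_cast_of_lt (mem_range.1 hn)]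
  · rw [← crt_natCast, ZMod.natCast_zmod_val, crt.apply_symm_apply]

theorem norm_dirichletCharacter_mul_conj_le_one {N N' : ℕ} (χ : DirichletCharacter ℂ N)
    (χ' : DirichletCharacter ℂ N') (n : ℕ) : ‖χ n * conj (χ' n)‖ ≤ 1 := by
  rw [norm_mul, RCLike.norm_conj]
  exact mul_le_one₀ (χ.norm_le_one _) (norm_nonneg _) (χ'.norm_le_one _)

theorem norm_sum_dirichletCharacter_mul_conj_le {N N' : ℕ} [NeZero N] [NeZero N']
    (hNN' : N.Coprime N') {χ : DirichletCharacter ℂ N} (hχ : χ ≠ 1)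
    (χ' : DirichletCharacter ℂ N') (M : ℕ) :
    ‖∑ n ∈ range M, χ n * conj (χ' n)‖ ≤ N * N' := by
  have full_period : ∑ n ∈ range (N * N'), χ n * conj (χ' n) = 0 := by
    rw [sum_range_mul_eq_sum_zmod_prod hNN' fun z ↦ χ z.1 * conj (χ' z.2),
      Fintype.sum_prod_type]
    simp only [← mul_sum, ← sum_mul, MulChar.sum_eq_zero_of_ne_one hχ, zero_mul]
  have periodic : Function.Periodic (fun n : ℕ ↦ χ n * conj (χ' n)) (N * N') := fun n ↦ by simp
  exact_mod_cast norm_sum_range_le_of_periodic (NeZero.pos _) periodic full_period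
    (norm_dirichletCharacter_mul_conj_le_one χ χ') M

theorem sum_norm_sum_dirichletCharacter_mul_conj_le {B : Finset ℕ} {x : ℕ}
    (χ : ∀ N : ℕ, DirichletCharacter ℂ N) (hcop : (B : Set ℕ).Pairwise Nat.Coprime)
    (hpos : ∀ N ∈ B, 0 < N) (hle : ∀ N ∈ B, N ≤ x) (hχ : ∀ N ∈ B, χ N ≠ 1) (M : ℕ) :
    ∑ N ∈ B, ∑ N' ∈ B, ‖∑ n ∈ range M, χ N n * conj (χ N' n)‖ ≤ #B * (M + #B * (x : ℝ) ^ 2) := by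
  have pair : ∀ N ∈ B, ∀ N' ∈ B, ‖∑ n ∈ range M, χ N n * conj (χ N' n)‖ ≤
      (if N = N' then (M : ℝ) else 0) + (x : ℝ) ^ 2 := by
    intro N hN N' hN'
    split_ifs with h
    · exact (norm_sum_range_le_of_norm_le_one
        (norm_dirichletCharacter_mul_conj_le_one (χ N) (χ N')) M).trans
        (le_add_of_nonneg_right (sq_nonneg _))
    · have : NeZero N := ⟨(hpos N hN).ne'⟩
      have : NeZero N' := ⟨(hpos N' hN').ne'⟩
      have hxN := hle N hN
      have hxN' := hle N' hN'
      calc ‖∑ n ∈ range M, χ N n * conj (χ N' n)‖ ≤ N * N' :=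
            norm_sum_dirichletCharacter_mul_conj_le (hcop hN hN' h) (hχ N hN) _ M
        _ ≤ x * x := by gcongr
        _ = 0 + (x : ℝ) ^ 2 := by ring
  calc ∑ N ∈ B, ∑ N' ∈ B, ‖∑ n ∈ range M, χ N n * conj (χ N' n)‖
      ≤ ∑ N ∈ B, ∑ N' ∈ B, ((if N = N' then (M : ℝ) else 0) + (x : ℝ) ^ 2) :=
        sum_le_sum fun N hN ↦ sum_le_sum fun N' hN' ↦ pair N hN N' hN'
    _ = ∑ N ∈ B, ((M : ℝ) + #B * (x : ℝ) ^ 2) := sum_congr rfl fun N hN ↦ by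
        rw [sum_add_distrib, sum_ite_eq, if_pos hN, sum_const, nsmul_eq_mul]
    _ = #B * (M + #B * (x : ℝ) ^ 2) := by rw [sum_const, nsmul_eq_mul]

theorem sum_norm_sum_mul_dirichletCharacter_sq_le {B : Finset ℕ} {x : ℕ}
    (χ : ∀ N : ℕ, DirichletCharacter ℂ N) (hcop : (B : Set ℕ).Pairwise Nat.Coprime)
    (hpos : ∀ N ∈ B, 0 < N) (hle : ∀ N ∈ B, N ≤ x) (hχ : ∀ N ∈ B, χ N ≠ 1) (M : ℕ) (a : ℕ → ℂ) :
    (∑ N ∈ B, ‖∑ n ∈ range M, a n * χ N n‖) ^ 2 ≤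
      (∑ n ∈ range M, ‖a n‖ ^ 2) * (#B * (M + #B * (x : ℝ) ^ 2)) := by
  have halasz := sum_norm_inner_sq_le (𝕜 := ℂ) B
    (fun N ↦ WithLp.toLp 2 fun n : Fin M ↦ χ N n) (WithLp.toLp 2 fun n : Fin M ↦ conj (a n))
  simp only [EuclideanSpace.inner_toLp_toLp, dotProduct, Pi.star_apply, RCLike.star_def,
    EuclideanSpace.norm_sq_eq, RCLike.conj_conj, RCLike.norm_conj] at halasz
  simp only [sum_range, mul_comm (a _)]
  refine halasz.trans (mul_le_mul_of_nonneg_left ?_ (by positivity))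
  rw [sum_comm]
  simpa only [sum_range] using sum_norm_sum_dirichletCharacter_mul_conj_le χ hcop hpos hle hχ M

end LargeSieve

section TupleCounting

/-- The number of `k`-tuples of elements of `Q` with product `n`, which is the coefficient of `n`
in the `k`-th power of a sum over `Q`. -/
def tupleProdCount (Q : Finset ℕ) (k n : ℕ) : ℕ :=
  #{f ∈ Fintype.piFinset fun _ : Fin k ↦ Q | ∏ i, f i = n}

theorem sum_pow_eq_sum_tupleProdCount_mul {R : Type*} [CommSemiring R] (f : ℕ →* R) {Q : Finset ℕ}
    {Y : ℕ} (hQ : ∀ q ∈ Q, q ≤ Y) (k : ℕ) :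
    (∑ q ∈ Q, f q) ^ k = ∑ n ∈ range (Y ^ k + 1), tupleProdCount Q k n * f n := by
  have hmaps : ∀ g ∈ Fintype.piFinset fun _ : Fin k ↦ Q, ∏ i, g i ∈ range (Y ^ k + 1) := by
    intro g hg
    rw [mem_range, Nat.lt_succ_iff]
    calc ∏ i, g i ≤ ∏ _i : Fin k, Y := prod_le_prod' fun i _ ↦ hQ _ (Fintype.mem_piFinset.1 hg i)
      _ = Y ^ k := by simp
  rw [sum_pow', ← sum_fiberwise_of_maps_to hmaps]
  refine sum_congr rfl fun n _ ↦ ?_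
  rw [tupleProdCount, ← nsmul_eq_mul, ← sum_const]
  exact sum_congr rfl fun g hg ↦ by rw [← (mem_filter.1 hg).2, map_prod]

theorem sum_tupleProdCount {Q : Finset ℕ} {Y : ℕ} (hQ : ∀ q ∈ Q, q ≤ Y) (k : ℕ) :
    ∑ n ∈ range (Y ^ k + 1), tupleProdCount Q k n = #Q ^ k := by
  simpa using (sum_pow_eq_sum_tupleProdCount_mul (1 : ℕ →* ℕ) hQ k).symm

theorem tupleProdCount_le {Q : Finset ℕ} (hQ : ∀ q ∈ Q, q.Prime) (k n : ℕ) :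
    tupleProdCount Q k n ≤ k ^ k := by
  rw [tupleProdCount]
  rcases ({f ∈ Fintype.piFinset fun _ : Fin k ↦ Q | ∏ i, f i = n}).eq_empty_or_nonempty
    with h | ⟨f, hf⟩
  · simp [h]
  obtain ⟨hfQ, hfn⟩ := mem_filter.1 hf
  rw [Fintype.mem_piFinset] at hfQ
  -- By unique factorisation every tuple with product `n` takes its entries from those of `f`.
  calc #{f ∈ Fintype.piFinset fun _ : Fin k ↦ Q | ∏ i, f i = n}
      ≤ #(Fintype.piFinset fun _ : Fin k ↦ univ.image f) := by
        refine card_le_card fun g hg ↦ Fintype.mem_piFinset.2 fun i ↦ ?_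
        obtain ⟨hgQ, hgn⟩ := mem_filter.1 hg
        have hgi := hQ _ (Fintype.mem_piFinset.1 hgQ i)
        have hdvd : g i ∣ ∏ j, f j := by
          rw [hfn, ← hgn]; exact dvd_prod_of_mem _ (mem_univ i)
        obtain ⟨j, -, hj⟩ := hgi.prime.exists_mem_finset_dvd hdvd
        have hij : g i = f j := (Nat.prime_dvd_prime_iff_eq hgi (hQ _ (hfQ j))).1 hj
        exact mem_image.2 ⟨j, mem_univ j, hij.symm⟩
    _ = #(univ.image f) ^ k := by simp
    _ ≤ k ^ k := by gcongr; exact card_image_le.trans (by simp)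

theorem sum_sq_tupleProdCount_le {Q : Finset ℕ} {Y : ℕ} (hQ : ∀ q ∈ Q, q.Prime ∧ q ≤ Y) (k : ℕ) :
    ∑ n ∈ range (Y ^ k + 1), tupleProdCount Q k n ^ 2 ≤ k ^ k * #Q ^ k := by
  rw [← sum_tupleProdCount fun q hq ↦ (hQ q hq).2, mul_sum]
  refine sum_le_sum fun n _ ↦ ?_
  rw [sq]
  gcongr
  exact tupleProdCount_le (fun q hq ↦ (hQ q hq).1) k n

end TupleCounting

section Sieve

theorem card_mul_pow_two_mul_le {B Q : Finset ℕ} {x Y : ℕ} (χ : ∀ N : ℕ, DirichletCharacter ℂ N)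
    (hcop : (B : Set ℕ).Pairwise Nat.Coprime) (hpos : ∀ N ∈ B, 0 < N) (hle : ∀ N ∈ B, N ≤ x)
    (hχ : ∀ N ∈ B, χ N ≠ 1) (hQ : ∀ q ∈ Q, q.Prime ∧ q ≤ Y) {D : ℝ} (hD0 : 0 ≤ D)
    (hD : ∀ N ∈ B, D ≤ ‖∑ q ∈ Q, χ N q‖) (k : ℕ) :
    #B * D ^ (2 * k) ≤ (k : ℝ) ^ k * (#Q : ℝ) ^ k * ((Y : ℝ) ^ k + 1 + #B * (x : ℝ) ^ 2) := by
  rcases B.eq_empty_or_nonempty with rfl | hB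
  · simp only [card_empty, Nat.cast_zero, zero_mul]
    positivity
  have hBpos : (0 : ℝ) < #B := by exact_mod_cast hB.card_pos
  have expand (N : ℕ) : (∑ q ∈ Q, χ N q) ^ k =
      ∑ n ∈ range (Y ^ k + 1), (tupleProdCount Q k n : ℂ) * χ N n :=
    sum_pow_eq_sum_tupleProdCount_mul
      ((χ N).toMonoidHom.comp (Nat.castRingHom (ZMod N)).toMonoidHom) (fun q hq ↦ (hQ q hq).2) k
  have lower :
      #B * D ^ k ≤ ∑ N ∈ B, ‖∑ n ∈ range (Y ^ k + 1), (tupleProdCount Q k n : ℂ) * χ N n‖ := by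
    rw [← nsmul_eq_mul]
    refine card_nsmul_le_sum _ _ _ fun N hN ↦ ?_
    rw [← expand, norm_pow]
    gcongr
    exact hD N hN
  have coeff :
      ∑ n ∈ range (Y ^ k + 1), ‖(tupleProdCount Q k n : ℂ)‖ ^ 2 ≤ (k : ℝ) ^ k * #Q ^ k := by
    simp only [Complex.norm_natCast]
    exact_mod_cast sum_sq_tupleProdCount_le hQ k
  refine le_of_mul_le_mul_left ?_ hBpos
  calc #B * (#B * D ^ (2 * k)) = (#B * D ^ k) ^ 2 := by ring
    _ ≤ (∑ N ∈ B, ‖∑ n ∈ range (Y ^ k + 1), (tupleProdCount Q k n : ℂ) * χ N n‖) ^ 2 := by gcongr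
    _ ≤ (∑ n ∈ range (Y ^ k + 1), ‖(tupleProdCount Q k n : ℂ)‖ ^ 2) *
          (#B * ((Y ^ k + 1 : ℕ) + #B * (x : ℝ) ^ 2)) :=
        sum_norm_sum_mul_dirichletCharacter_sq_le χ hcop hpos hle hχ _ _
    _ ≤ (k : ℝ) ^ k * #Q ^ k * (#B * ((Y ^ k + 1 : ℕ) + #B * (x : ℝ) ^ 2)) := by gcongr
    _ = #B * ((k : ℝ) ^ k * (#Q : ℝ) ^ k * ((Y : ℝ) ^ k + 1 + #B * (x : ℝ) ^ 2)) := by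
        push_cast; ring

/-- `p` has no prime primitive root `q ≤ y`. A natural number `q` is a primitive root modulo the
prime `p` exactly if its class in `ZMod p` has multiplicative order `p - 1`. -/
def LacksPrimePrimitiveRoot (y : ℝ) (p : ℕ) : Prop :=
  ¬ ∃ q : ℕ, q.Prime ∧ (q : ℝ) ≤ y ∧ orderOf (q : ZMod p) = p - 1

theorem LacksPrimePrimitiveRoot.anti {y z : ℝ} {p : ℕ} (h : LacksPrimePrimitiveRoot z p)
    (hyz : y ≤ z) : LacksPrimePrimitiveRoot y p :=
  fun ⟨q, hq, hqy, hord⟩ ↦ h ⟨q, hq, hqy.trans hyz, hord⟩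

theorem LacksPrimePrimitiveRoot.exists_dirichletCharacter {Y p : ℕ} (hp : p.Prime)
    (h : LacksPrimePrimitiveRoot Y p) (hY : 2 ≤ Y) (hYp : Y < p) :
    ∃ χ : DirichletCharacter ℂ p, χ ≠ 1 ∧
      (Y.primeCounting : ℝ) ≤ (#(p - 1).divisors : ℝ) ^ 2 * ‖∑ q ∈ Y.primesLE, χ q‖ := by
  have : Fact p.Prime := ⟨hp⟩
  have hcard : Nat.card (ZMod p)ˣ = p - 1 := by rw [Nat.card_eq_fintype_card, ZMod.card_units]
  rw [← Nat.primesLE_card_eq_primeCounting, ← hcard]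
  refine exists_mulChar_ne_one_card_le_of_orderOf_ne_card ⟨2, ?_⟩ (fun q hq ↦ ?_) fun q hq hord ↦ ?_
  · exact Nat.mem_primesLE.2 ⟨hY, Nat.prime_two⟩
  · obtain ⟨hqY, hq⟩ := Nat.mem_primesLE.1 hq
    exact (ZMod.isUnit_iff_coprime _ _).2 ((Nat.coprime_primes hq hp).2 (hqY.trans_lt hYp).ne)
  · obtain ⟨hqY, hq⟩ := Nat.mem_primesLE.1 hq
    exact h ⟨q, hq, by exact_mod_cast hqY, hord.trans hcard⟩

theorem card_mul_primeCounting_pow_le {B : Finset ℕ} {x Y t : ℕ} (hprime : ∀ p ∈ B, p.Prime)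
    (hle : ∀ p ∈ B, p ≤ x) (hYp : ∀ p ∈ B, Y < p) (hdiv : ∀ p ∈ B, #(p - 1).divisors ≤ t)
    (hlacks : ∀ p ∈ B, LacksPrimePrimitiveRoot Y p) (hY : 2 ≤ Y) (ht : 0 < t) (k : ℕ) :
    #B * (Y.primeCounting : ℝ) ^ k ≤
      ((k : ℝ) * t ^ 4) ^ k * ((Y : ℝ) ^ k + 1 + #B * (x : ℝ) ^ 2) := by
  choose! χ hχ hχsum using fun p hp ↦
    (hlacks p hp).exists_dirichletCharacter (hprime p hp) hY (hYp p hp)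
  have hP : (0 : ℝ) < Y.primeCounting := by
    rw [← Nat.primesLE_card_eq_primeCounting, Nat.cast_pos, card_pos]
    exact ⟨2, Nat.mem_primesLE.2 ⟨hY, Nat.prime_two⟩⟩
  have hD : ∀ p ∈ B, (Y.primeCounting : ℝ) / t ^ 2 ≤ ‖∑ q ∈ Y.primesLE, χ p q‖ := fun p hp ↦ by
    rw [div_le_iff₀' (by positivity)]
    refine (hχsum p hp).trans ?_
    gcongr
    exact hdiv p hp
  have sieve := card_mul_pow_two_mul_le χ
    (fun p hp p' hp' ↦ (Nat.coprime_primes (hprime p hp) (hprime p' hp')).2)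
    (fun p hp ↦ (hprime p hp).pos) hle hχ (fun q hq ↦ (Nat.mem_primesLE.1 hq).symm) (by positivity)
    hD k
  rw [Nat.primesLE_card_eq_primeCounting] at sieve
  refine le_of_mul_le_mul_left ?_ (pow_pos hP k)
  calc (Y.primeCounting : ℝ) ^ k * (#B * Y.primeCounting ^ k)
      = (t ^ 4) ^ k * (#B * (Y.primeCounting / t ^ 2) ^ (2 * k)) := by
        rw [mul_left_comm, mul_left_comm (((t : ℝ) ^ 4) ^ k), pow_mul, ← mul_pow, ← mul_pow]
        congr 2
        field_simp
    _ ≤ (t ^ 4) ^ k * (k ^ k * Y.primeCounting ^ k * (Y ^ k + 1 + #B * (x : ℝ) ^ 2)) := by gcongr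
    _ = Y.primeCounting ^ k * ((k * t ^ 4) ^ k * (Y ^ k + 1 + #B * (x : ℝ) ^ 2)) := by ring

theorem card_le_of_lacksPrimePrimitiveRoot {B : Finset ℕ} {x k l : ℕ} (hprime : ∀ p ∈ B, p.Prime)
    (hle : ∀ p ∈ B, p ≤ x) (hlp : ∀ p ∈ B, l ^ 128 < p) (hdiv : ∀ p ∈ B, #(p - 1).divisors ≤ l ^ 3)
    (hlacks : ∀ p ∈ B, LacksPrimePrimitiveRoot ((l : ℝ) ^ 128) p) (hl : 2 ≤ l) (hkl : k ≤ l)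
    (hxk : 2 * x ^ 2 ≤ l ^ (114 * k)) (hpi : l ^ 127 ≤ (l ^ 128).primeCounting) :
    #B ≤ 4 * l ^ (14 * k) := by
  have sieve := card_mul_primeCounting_pow_le hprime hle hlp hdiv (mod_cast hlacks)
    (hl.trans (Nat.le_self_pow (by norm_num) l)) (by positivity) k
  -- The exponents of `L` add up: `13 + 128 = 127 + 14` and `13 + 114 = 127`.
  set L : ℝ := (l : ℝ) ^ k with hL
  have hL1 : 1 ≤ L := one_le_pow₀ (by exact_mod_cast one_le_two.trans hl)
  have hxL : 2 * (x : ℝ) ^ 2 ≤ L ^ 114 := by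
    rw [hL, ← pow_mul, mul_comm k]; exact_mod_cast hxk
  have hcoeff : ((k : ℝ) * (l ^ 3 : ℕ) ^ 4) ^ k ≤ L ^ 13 := by
    calc ((k : ℝ) * (l ^ 3 : ℕ) ^ 4) ^ k ≤ ((l : ℝ) * (l ^ 3 : ℕ) ^ 4) ^ k := by gcongr
      _ = L ^ 13 := by push_cast; ring
  have hlength : ((l ^ 128 : ℕ) : ℝ) ^ k + 1 ≤ 2 * L ^ 128 := by
    have : ((l ^ 128 : ℕ) : ℝ) ^ k = L ^ 128 := by push_cast; ring
    linarith [one_le_pow₀ hL1 (n := 128)]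
  have hpiL : L ^ 127 ≤ ((l ^ 128).primeCounting : ℝ) ^ k := by
    rw [hL, ← pow_mul, mul_comm, pow_mul]
    gcongr
    exact_mod_cast hpi
  have self_bound : #B * L ^ 127 ≤ 2 * L ^ 141 + #B * L ^ 127 / 2 := by
    calc #B * L ^ 127 ≤ #B * ((l ^ 128).primeCounting : ℝ) ^ k := by gcongr
      _ ≤ L ^ 13 * (2 * L ^ 128 + #B * (L ^ 114 / 2)) := by
          refine sieve.trans ?_
          gcongr
          linarith
      _ = 2 * L ^ 141 + #B * L ^ 127 / 2 := by ring
  have : (#B : ℝ) ≤ 4 * L ^ 14 := by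
    refine le_of_mul_le_mul_left ?_ (pow_pos (zero_lt_one.trans_le hL1) 127)
    linarith
  rw [hL, ← pow_mul, mul_comm k] at this
  exact_mod_cast this

end Sieve

section Divisors

theorem sum_card_divisors_le (x : ℕ) :
    ∑ n ∈ Ioc 0 x, (#n.divisors : ℝ) ≤ x * (1 + Real.log x) := by
  have hyperbola : ∑ n ∈ Ioc 0 x, (#n.divisors : ℝ) = ∑ d ∈ Ioc 0 x, ((x / d : ℕ) : ℝ) := by
    simpa only [ArithmeticFunction.sigma_zero_apply, ← Nat.cast_sum, Nat.cast_inj] using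
      ArithmeticFunction.sum_Ioc_sigma0_eq_sum_div x
  have harmonic_eq : (harmonic x : ℝ) = ∑ d ∈ Ioc 0 x, (d : ℝ)⁻¹ := by
    rw [harmonic_eq_sum_Icc]
    push_cast
    rfl
  calc ∑ n ∈ Ioc 0 x, (#n.divisors : ℝ) ≤ ∑ d ∈ Ioc 0 x, (x : ℝ) * (d : ℝ)⁻¹ := by
        rw [hyperbola]
        exact sum_le_sum fun d _ ↦ Nat.cast_div_le.trans_eq (div_eq_mul_inv _ _)
    _ = x * (harmonic x : ℝ) := by rw [harmonic_eq, mul_sum]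
    _ ≤ x * (1 + Real.log x) := by gcongr; exact harmonic_le_one_add_log x

theorem card_primesLE_lt_card_divisors_mul_le (x m : ℕ) :
    (#{p ∈ x.primesLE | m < #(p - 1).divisors} : ℝ) * m ≤ x * (1 + Real.log x) := by
  have mem_Ioc_pred : ∀ p ∈ x.primesLE, p - 1 ∈ Ioc 0 x := fun p hp ↦ by
    have := Nat.two_le_of_mem_primesLE hp
    have := Nat.le_of_mem_primesLE hp
    exact mem_Ioc.2 (by omega)
  have pred_injOn : Set.InjOn (fun p ↦ p - 1) (x.primesLE : Set ℕ) := by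
    intro p hp p' hp' (h : p - 1 = p' - 1)
    have := Nat.two_le_of_mem_primesLE (mem_coe.1 hp)
    have := Nat.two_le_of_mem_primesLE (mem_coe.1 hp')
    omega
  calc (#{p ∈ x.primesLE | m < #(p - 1).divisors} : ℝ) * m
      ≤ ∑ p ∈ x.primesLE with m < #(p - 1).divisors, (#(p - 1).divisors : ℝ) := by
        rw [← nsmul_eq_mul]
        exact card_nsmul_le_sum _ _ _ fun p hp ↦ by exact_mod_cast (mem_filter.1 hp).2.le
    _ ≤ ∑ p ∈ x.primesLE, (#(p - 1).divisors : ℝ) :=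
        sum_le_sum_of_subset_of_nonneg (filter_subset _ _) fun _ _ _ ↦ by positivity
    _ = ∑ n ∈ x.primesLE.image (fun p ↦ p - 1), (#n.divisors : ℝ) := by
        rw [sum_image pred_injOn]
    _ ≤ ∑ n ∈ Ioc 0 x, (#n.divisors : ℝ) :=
        sum_le_sum_of_subset_of_nonneg (image_subset_iff.2 mem_Ioc_pred) fun _ _ _ ↦ by positivity
    _ ≤ x * (1 + Real.log x) := sum_card_divisors_le x

end Divisors

section Asymptotics

open Filter

theorem eventually_log_le_mul {c : ℝ} (hc : 0 < c) : ∀ᶠ n : ℕ in atTop, Real.log n ≤ c * n := by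
  filter_upwards [tendsto_natCast_atTop_atTop.eventually (Real.isLittleO_log_id_atTop.bound hc)]
    with n hn
  simpa using (le_abs_self _).trans hn

theorem eventually_half_le_primeCounting_mul_log :
    ∀ᶠ n : ℕ in atTop, (n : ℝ) / 2 ≤ n.primeCounting * Real.log n := by
  filter_upwards [(tendsto_add_atTop_nat 1).eventually
    (eventually_log_le_mul (c := 1 / 20) (by norm_num)), eventually_ge_atTop 1] with n hn hn1
  have hpsi := (Chebyshev.psi_ge n).trans (Chebyshev.psi_le_primeCounting_mul_log n)
  have hn1 : (1 : ℝ) ≤ n := by exact_mod_cast hn1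
  push_cast at hn
  nlinarith [Real.log_two_gt_d9]

theorem eventually_pow_le_primeCounting_pow_succ (m : ℕ) :
    ∀ᶠ l : ℕ in atTop, l ^ m ≤ (l ^ (m + 1)).primeCounting := by
  filter_upwards [eventually_log_le_mul (c := 1 / (2 * (m + 1))) (by positivity),
    (tendsto_pow_atTop m.succ_ne_zero).eventually eventually_half_le_primeCounting_mul_log,
    eventually_gt_atTop 0] with l hlog hpi hl
  rify at hl
  set P := (l ^ (m + 1)).primeCounting
  have : (l : ℝ) ^ m * (l / 2) ≤ P * (l / 2) := by
    calc (l : ℝ) ^ m * (l / 2) = ((l ^ (m + 1) : ℕ) : ℝ) / 2 := by push_cast; ring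
      _ ≤ P * ((m + 1) * Real.log l) := by
          simpa only [Nat.cast_pow, Real.log_pow, Nat.cast_succ] using hpi
      _ ≤ P * ((m + 1) * (1 / (2 * (m + 1)) * l)) := by gcongr
      _ = P * (l / 2) := by field_simp
  exact_mod_cast le_of_mul_le_mul_right this (by positivity)

theorem eventually_pow_le_two_pow (m : ℕ) : ∀ᶠ l : ℕ in atTop, l ^ m ≤ 2 ^ l := by
  filter_upwards [(isLittleO_pow_const_const_pow_of_one_lt (R := ℝ) m one_lt_two).bound one_pos]
    with l hl
  simp only [norm_pow, RCLike.norm_natCast, RCLike.norm_ofNat, one_mul] at hl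
  exact_mod_cast hl

theorem tendsto_natLog_two_atTop : Tendsto (Nat.log 2) atTop atTop :=
  tendsto_atTop_atTop_of_monotone Nat.log_monotone fun b ↦
    ⟨2 ^ b, (Nat.log_pow one_lt_two b).ge⟩

end Asymptotics

section Density

theorem log_le_two_mul_natLog_two {x : ℕ} (hx : 2 ≤ x) : Real.log x ≤ 2 * Nat.log 2 x := by
  have hlog1 : (1 : ℝ) ≤ Nat.log 2 x := by exact_mod_cast Nat.log_pos one_lt_two hx
  have hxlt : (x : ℝ) ≤ 2 ^ (Nat.log 2 x + 1) := by
    exact_mod_cast (Nat.lt_pow_succ_log_self one_lt_two x).le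
  have hlog := Real.log_le_log (by positivity) hxlt
  rw [Real.log_pow] at hlog
  push_cast at hlog
  nlinarith [Real.log_two_lt_d9]

theorem natLog_two_le_three_mul_log {x p : ℕ} (hp : x.sqrt < p) :
    Nat.log 2 x ≤ 3 * Real.log p := by
  rcases x.eq_zero_or_pos with rfl | hx
  · simpa using Real.log_natCast_nonneg p
  have hxp : (x : ℝ) ≤ p ^ 2 := by
    rw [sq]
    exact_mod_cast (Nat.sqrt_lt.1 hp).le
  have hlog : Real.log x ≤ 2 * Real.log p := by
    simpa using Real.log_le_log (by positivity) hxp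
  calc (Nat.log 2 x : ℝ) ≤ Real.log x / Real.log 2 := by
        simpa only [Real.logb, Nat.cast_ofNat] using Real.natLog_le_logb x 2
    _ ≤ 3 * Real.log p := by
        rw [div_le_iff₀ (Real.log_pos one_lt_two)]
        nlinarith [Real.log_two_gt_d9, Real.log_natCast_nonneg p]

theorem exists_pow_le_sqrt_and_sq_le_pow {x l : ℕ} (hl : 2 ≤ l) (hlx : l ^ 28 ≤ x)
    (hxl : x < 2 ^ (l + 1)) :
    ∃ k ≤ l, 2 * x ^ 2 ≤ l ^ (114 * k) ∧ l ^ (14 * k) ≤ x.sqrt := by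
  have hbase : 1 < l ^ 28 := Nat.one_lt_pow (by norm_num) hl
  have hx : x ≠ 0 := (zero_lt_one.trans (hbase.trans_le hlx)).ne'
  set k := Nat.log (l ^ 28) x
  have hkx : (l ^ 28) ^ k ≤ x := Nat.pow_log_le_self _ hx
  have hxk : x < (l ^ 28) ^ (k + 1) := Nat.lt_pow_succ_log_self hbase x
  have hk : 0 < k := Nat.log_pos hbase hlx
  refine ⟨k, ?_, ?_, ?_⟩
  · have : 2 ^ (28 * k) < 2 ^ (l + 1) :=
      calc 2 ^ (28 * k) = (2 ^ 28) ^ k := pow_mul _ _ _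
        _ ≤ (l ^ 28) ^ k := by gcongr
        _ < 2 ^ (l + 1) := hkx.trans_lt hxl
    have := (Nat.pow_lt_pow_iff_right one_lt_two).1 this
    omega
  · calc 2 * x ^ 2 ≤ l * ((l ^ 28) ^ (k + 1)) ^ 2 := by gcongr
      _ = l ^ (57 + 56 * k) := by ring
      _ ≤ l ^ (114 * k) := Nat.pow_le_pow_right (by omega) (by omega)
  · rw [Nat.le_sqrt]
    calc l ^ (14 * k) * l ^ (14 * k) = (l ^ 28) ^ k := by ring
      _ ≤ x := hkx

theorem card_lacksPrimePrimitiveRoot_le_four_mul_sqrt {x l : ℕ} (hl : 2 ≤ l) (hlx : l ^ 256 ≤ x)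
    (hxl : x < 2 ^ (l + 1)) (hpi : l ^ 127 ≤ (l ^ 128).primeCounting) :
    #{p ∈ x.primesLE | x.sqrt < p ∧ #(p - 1).divisors ≤ l ^ 3 ∧
      LacksPrimePrimitiveRoot ((l : ℝ) ^ 128) p} ≤ 4 * x.sqrt := by
  have hl_sqrt : l ^ 128 ≤ x.sqrt := Nat.le_sqrt.2 <| by rwa [← pow_add]
  obtain ⟨k, hkl, hxk, hkx⟩ := exists_pow_le_sqrt_and_sq_le_pow hl
    ((Nat.pow_le_pow_right (by omega) (by norm_num)).trans hlx) hxl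
  refine (card_le_of_lacksPrimePrimitiveRoot (x := x) ?_ ?_ ?_ ?_ ?_ hl hkl hxk hpi).trans
    (Nat.mul_le_mul_left 4 hkx)
  all_goals
    intro p hp
    obtain ⟨hp, hsqrt, hdiv, hlacks⟩ := mem_filter.1 hp
  exacts [Nat.prime_of_mem_primesLE hp, Nat.le_of_mem_primesLE hp, hl_sqrt.trans_lt hsqrt, hdiv,
    hlacks]

theorem card_primesLE_lt_card_divisors_mul_sq_le {x : ℕ} (hx : 2 ≤ x) :
    (#{p ∈ x.primesLE | Nat.log 2 x ^ 3 < #(p - 1).divisors} : ℝ) * Nat.log 2 x ^ 2 ≤ 3 * x := by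
  have hlog := log_le_two_mul_natLog_two hx
  have hdiv := card_primesLE_lt_card_divisors_mul_le x (Nat.log 2 x ^ 3)
  have hlog1 : (1 : ℝ) ≤ Nat.log 2 x := by exact_mod_cast Nat.log_pos one_lt_two hx
  rw [Nat.cast_pow] at hdiv
  set l := (Nat.log 2 x : ℝ)
  refine le_of_mul_le_mul_right ?_ (zero_lt_one.trans_le hlog1)
  calc (#{p ∈ x.primesLE | Nat.log 2 x ^ 3 < #(p - 1).divisors} : ℝ) * l ^ 2 * l
      ≤ x * (1 + Real.log x) := by
        rwa [mul_assoc, ← pow_succ]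
    _ ≤ x * (3 * l) := by gcongr; linarith
    _ = 3 * x * l := by ring

theorem card_filter_lacksPrimePrimitiveRoot_le {x l : ℕ} {y : ℕ → ℝ}
    (hy : ∀ p, x.sqrt < p → (l : ℝ) ^ 128 ≤ y p) (hl : 2 ≤ l) (hlx : l ^ 256 ≤ x)
    (hxl : x < 2 ^ (l + 1)) (hpi : l ^ 127 ≤ (l ^ 128).primeCounting) :
    #{p ∈ x.primesLE | LacksPrimePrimitiveRoot (y p) p} ≤
      6 * x.sqrt + #{p ∈ x.primesLE | l ^ 3 < #(p - 1).divisors} := by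
  set S := {p ∈ x.primesLE | l ^ 3 < #(p - 1).divisors}
  set T := {p ∈ x.primesLE | x.sqrt < p ∧ #(p - 1).divisors ≤ l ^ 3 ∧
    LacksPrimePrimitiveRoot ((l : ℝ) ^ 128) p}
  have hT : #T ≤ 4 * x.sqrt := card_lacksPrimePrimitiveRoot_le_four_mul_sqrt hl hlx hxl hpi
  have hcover : {p ∈ x.primesLE | LacksPrimePrimitiveRoot (y p) p} ⊆
      range (x.sqrt + 1) ∪ (S ∪ T) := by
    intro p hp
    obtain ⟨hp, hlacks⟩ := mem_filter.1 hp
    rcases le_or_gt p x.sqrt with hsmall | hlarge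
    · exact mem_union_left _ (mem_range.2 (Nat.lt_succ_of_le hsmall))
    refine mem_union_right _ ?_
    rcases lt_or_ge (l ^ 3) #(p - 1).divisors with hmany | hfew
    · exact mem_union_left _ (mem_filter.2 ⟨hp, hmany⟩)
    · exact mem_union_right _ (mem_filter.2 ⟨hp, hlarge, hfew, hlacks.anti (hy p hlarge)⟩)
  have hsqrt : 0 < x.sqrt := Nat.sqrt_pos.2 ((Nat.pow_pos (by omega)).trans_le hlx)
  have hcard := card_le_card hcover
  grw [card_union_le, card_union_le, card_range] at hcard
  omega

theorem natLog_two_pow_le {x p : ℕ} (hp : x.sqrt < p) :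
    (Nat.log 2 x : ℝ) ^ 128 ≤ 3 ^ 128 * Real.log p ^ (128 : ℝ) := by
  rw [← Nat.cast_ofNat (R := ℝ) (n := 128), Real.rpow_natCast, ← mul_pow]
  gcongr
  exact natLog_two_le_three_mul_log hp

theorem card_lacksPrimePrimitiveRoot_mul_sq_le {x : ℕ} {y : ℕ → ℝ}
    (hy : ∀ p, x.sqrt < p → (Nat.log 2 x : ℝ) ^ 128 ≤ y p)
    (hl : 2 ≤ Nat.log 2 x) (hl2 : Nat.log 2 x ^ 256 ≤ 2 ^ Nat.log 2 x)
    (hpi : Nat.log 2 x ^ 127 ≤ (Nat.log 2 x ^ 128).primeCounting) :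
    (#{p ∈ x.primesLE | LacksPrimePrimitiveRoot (y p) p} : ℝ) * Nat.log 2 x ^ 2 ≤ 9 * x := by
  have hx : 2 ≤ x := (Nat.log_pos_iff.1 (zero_lt_two.trans_le hl)).1
  have hlx := hl2.trans (Nat.pow_log_le_self 2 (by omega : x ≠ 0))
  have hcard := card_filter_lacksPrimePrimitiveRoot_le hy hl hlx
    (Nat.lt_pow_succ_log_self one_lt_two x) hpi
  have hsmooth := card_primesLE_lt_card_divisors_mul_sq_le hx
  have hsqrt : x.sqrt * Nat.log 2 x ^ 2 ≤ x := by
    calc x.sqrt * Nat.log 2 x ^ 2 ≤ x.sqrt * Nat.log 2 x ^ 128 := by gcongr <;> omega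
      _ ≤ x.sqrt * x.sqrt := by gcongr; rwa [Nat.le_sqrt, ← pow_add]
      _ ≤ x := Nat.sqrt_le x
  set G := {p ∈ x.primesLE | LacksPrimePrimitiveRoot (y p) p}
  set S := {p ∈ x.primesLE | Nat.log 2 x ^ 3 < #(p - 1).divisors}
  rify at hcard hsqrt
  calc #G * (Nat.log 2 x : ℝ) ^ 2 ≤ (6 * x.sqrt + #S) * (Nat.log 2 x : ℝ) ^ 2 := by gcongr
    _ = 6 * (x.sqrt * (Nat.log 2 x : ℝ) ^ 2) + #S * (Nat.log 2 x : ℝ) ^ 2 := by ring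
    _ ≤ 9 * x := by linarith

theorem card_lacksPrimePrimitiveRoot_div_primeCounting_le {x : ℕ} {y : ℕ → ℝ}
    (hy : ∀ p, x.sqrt < p → (Nat.log 2 x : ℝ) ^ 128 ≤ y p)
    (hl : 2 ≤ Nat.log 2 x) (hl2 : Nat.log 2 x ^ 256 ≤ 2 ^ Nat.log 2 x)
    (hpi : Nat.log 2 x ^ 127 ≤ (Nat.log 2 x ^ 128).primeCounting)
    (hx : (x : ℝ) / 2 ≤ x.primeCounting * Real.log x) :
    (#{p ∈ x.primesLE | LacksPrimePrimitiveRoot (y p) p} : ℝ) / x.primeCounting ≤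
      36 / Nat.log 2 x := by
  have hcard := card_lacksPrimePrimitiveRoot_mul_sq_le hy hl hl2 hpi
  have hx2 : 2 ≤ x := (Nat.log_pos_iff.1 (zero_lt_two.trans_le hl)).1
  have hpos : (0 : ℝ) < x.primeCounting := by
    rw [Nat.cast_pos, Nat.pos_iff_ne_zero, Ne, Nat.primeCounting_eq_zero_iff]
    omega
  have hlog := log_le_two_mul_natLog_two hx2
  have hl0 : (0 : ℝ) < Nat.log 2 x := by positivity
  set G := {p ∈ x.primesLE | LacksPrimePrimitiveRoot (y p) p}
  rw [div_le_div_iff₀ hpos hl0]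
  refine le_of_mul_le_mul_right ?_ hl0
  calc (#G : ℝ) * Nat.log 2 x * Nat.log 2 x = #G * Nat.log 2 x ^ 2 := by ring
    _ ≤ 9 * x := hcard
    _ ≤ 18 * (x.primeCounting * Real.log x) := by linarith
    _ ≤ 18 * (x.primeCounting * (2 * Nat.log 2 x)) := by gcongr
    _ = 36 * x.primeCounting * Nat.log 2 x := by ring

theorem tendsto_card_lacksPrimePrimitiveRoot_div_primeCounting {y : ℕ → ℝ}
    (hy : ∀ x p : ℕ, x.sqrt < p → (Nat.log 2 x : ℝ) ^ 128 ≤ y p) :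
    Filter.Tendsto (fun x : ℕ ↦
      (#{p ∈ x.primesLE | LacksPrimePrimitiveRoot (y p) p} : ℝ) / x.primeCounting)
      Filter.atTop (nhds 0) := by
  have hbound : Filter.Tendsto (fun x : ℕ ↦ (36 : ℝ) / Nat.log 2 x) Filter.atTop (nhds 0) :=
    (tendsto_const_div_atTop_nhds_zero_nat 36).comp tendsto_natLog_two_atTop
  refine squeeze_zero' (.of_forall fun x ↦ by positivity) ?_ hbound
  filter_upwards [eventually_half_le_primeCounting_mul_log,
    tendsto_natLog_two_atTop.eventually_ge_atTop 2,
    tendsto_natLog_two_atTop.eventually (eventually_pow_le_two_pow 256),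
    tendsto_natLog_two_atTop.eventually (eventually_pow_le_primeCounting_pow_succ 127)]
    with x hx hl hl2 hpi
  exact card_lacksPrimePrimitiveRoot_div_primeCounting_le (hy x) hl hl2 hpi hx

end Density

/-- There exist constants `c > 1` and `C > 0` such that the set of primes `p` having no
prime primitive root `q ≤ C * (log p) ^ c` has relative density zero in the primes. -/
theorem almost_all_primes_have_small_prime_primitive_root :
    ∃ c : ℝ, 1 < c ∧ ∃ C : ℝ, 0 < C ∧
      Filter.Tendsto
        (fun x : ℕ =>
          (((Finset.range (x + 1)).filter (fun p : ℕ => p.Prime ∧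
              ¬ ∃ q : ℕ, q.Prime ∧ (q : ℝ) ≤ C * Real.log p ^ c ∧
                orderOf ((q : ZMod p)) = p - 1)).card : ℝ) / (Nat.primeCounting x : ℝ))
        Filter.atTop (nhds 0) := by
  refine ⟨128, by norm_num, 3 ^ 128, by positivity, ?_⟩
  have lacks_tendsto := tendsto_card_lacksPrimePrimitiveRoot_div_primeCounting
    (y := fun p ↦ 3 ^ 128 * Real.log p ^ (128 : ℝ)) fun _ _ ↦ natLog_two_pow_le
  simp only [Nat.primesLE_eq_filter_range, filter_filter] at lacks_tendsto
  convert lacks_tendsto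
end

section
/- There exist a real constant B₁ (the Mertens constant, B₁ = lim_{x→∞} (Σ_{p ≤ x, p prime} 1/p − log log x)) and a constant C > 0 such that for all real x ≥ 3: | Σ_{n ≤ x} ω(n) − (x log log x + B₁ x) | ≤ C x / log x. -/
open Finset

/-!
Exchanging the order of summation gives `∑_{n ≤ x} ω(n) = ∑_{p ≤ x} ⌊x / p⌋`, which differs from
`x ∑_{p ≤ x} 1 / p` by at most `π(x) = O(x / log x)`, by Chebyshev. What remains is the second
Mertens theorem `∑_{p ≤ x} 1 / p = log log x + B₁ + O(1 / log x)`. It follows by partial summation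
from the first one, `∑_{p ≤ x} log p / p = log x + O(1)`, which is a comparison of Stirling's
formula with the prime factorization of `n!`.
-/

open Filter Topology MeasureTheory
open Real (log)
open Nat (primesLE primeCounting mem_primesLE)
open scoped Nat

section PartialSummation

variable {c : ℕ → ℝ} {f f' g g' : ℝ → ℝ} {a b K : ℝ}

theorem sum_mul_eq_integral_add_sub_sub_integral (ha : 0 ≤ a) (hab : a ≤ b)
    (hf : ∀ t ∈ Set.Icc a b, HasDerivAt f (f' t) t) (hf' : IntervalIntegrable f' volume a b)
    (hg : ∀ t ∈ Set.Icc a b, HasDerivAt g (g' t) t) (hg' : IntervalIntegrable g' volume a b) :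
    ∑ k ∈ Ioc ⌊a⌋₊ ⌊b⌋₊, f k * c k =
      (∫ t in a..b, f t * g' t) + f b * (∑ k ∈ Icc 0 ⌊b⌋₊, c k - g b) -
        f a * (∑ k ∈ Icc 0 ⌊a⌋₊, c k - g a) -
        ∫ t in a..b, f' t * (∑ k ∈ Icc 0 ⌊t⌋₊, c k - g t) := by
  have hderiv : Set.EqOn (deriv f) f' (Set.Icc a b) := fun t ht ↦ (hf t ht).deriv
  have hf'_Icc : IntegrableOn f' (Set.Icc a b) :=
    (intervalIntegrable_iff_integrableOn_Icc_of_le hab).1 hf'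
  have habel := sum_mul_eq_sub_sub_integral_mul c ha hab
    (fun t ht ↦ (hf t ht).differentiableAt)
    ((integrableOn_congr_fun hderiv measurableSet_Icc).2 hf'_Icc)
  have hint : ∫ t in Set.Ioc a b, deriv f t * ∑ k ∈ Icc 0 ⌊t⌋₊, c k =
      ∫ t in a..b, f' t * ∑ k ∈ Icc 0 ⌊t⌋₊, c k := by
    rw [intervalIntegral.integral_of_le hab]
    refine setIntegral_congr_fun measurableSet_Ioc fun t ht ↦ ?_
    simp only [hderiv (Set.Ioc_subset_Icc_self ht)]
  have hf'c : IntervalIntegrable (fun t ↦ f' t * ∑ k ∈ Icc 0 ⌊t⌋₊, c k) volume a b :=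
    (intervalIntegrable_iff_integrableOn_Icc_of_le hab).2 (integrableOn_mul_sum_Icc c ha hf'_Icc)
  rw [← Set.uIcc_of_le hab] at hf hg
  have hf'g : IntervalIntegrable (fun t ↦ f' t * g t) volume a b :=
    hf'.mul_continuousOn fun t ht ↦ (hg t ht).continuousAt.continuousWithinAt
  have hparts := intervalIntegral.integral_mul_deriv_eq_deriv_mul hf hg hf' hg'
  simp only [mul_sub]
  rw [intervalIntegral.integral_sub hf'c hf'g, habel, hint, hparts]
  ring

theorem abs_sum_mul_sub_integral_le (ha : 0 ≤ a) (hab : a ≤ b)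
    (hf : ∀ t ∈ Set.Icc a b, HasDerivAt f (f' t) t) (hf' : IntervalIntegrable f' volume a b)
    (hf'_nonpos : ∀ t ∈ Set.Icc a b, f' t ≤ 0) (hfb : 0 ≤ f b)
    (hg : ∀ t ∈ Set.Icc a b, HasDerivAt g (g' t) t) (hg' : IntervalIntegrable g' volume a b)
    (hK : ∀ t ∈ Set.Icc a b, |∑ k ∈ Icc 0 ⌊t⌋₊, c k - g t| ≤ K) :
    |∑ k ∈ Ioc ⌊a⌋₊ ⌊b⌋₊, f k * c k - ∫ t in a..b, f t * g' t| ≤ 2 * K * f a := by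
  -- `f` decreases, so its boundary values and its total variation add up to `2 * f a`.
  set R : ℝ → ℝ := fun t ↦ ∑ k ∈ Icc 0 ⌊t⌋₊, c k - g t
  have hint_f' : ∫ t in a..b, f' t = f b - f a := by
    rw [← Set.uIcc_of_le hab] at hf
    exact intervalIntegral.integral_eq_sub_of_hasDerivAt hf hf'
  have hint_R : |∫ t in a..b, f' t * R t| ≤ K * (f a - f b) := calc
    |∫ t in a..b, f' t * R t| ≤ ∫ t in a..b, -f' t * K := by
      rw [← Real.norm_eq_abs]
      refine intervalIntegral.norm_integral_le_of_norm_le hab (.of_forall fun t ht ↦ ?_)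
        (hf'.neg.mul_const K)
      have ht' := Set.Ioc_subset_Icc_self ht
      rw [norm_mul, Real.norm_of_nonpos (hf'_nonpos t ht')]
      exact mul_le_mul_of_nonneg_left (hK t ht') (neg_nonneg.2 (hf'_nonpos t ht'))
    _ = K * (f a - f b) := by
      rw [intervalIntegral.integral_mul_const, intervalIntegral.integral_neg, hint_f']
      ring
  have hfa : 0 ≤ f a := by
    have : ∫ t in a..b, f' t ≤ ∫ _ in a..b, (0 : ℝ) :=
      intervalIntegral.integral_mono_on hab hf' intervalIntegrable_const hf'_nonpos
    rw [intervalIntegral.integral_zero, hint_f'] at this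
    linarith
  calc |∑ k ∈ Ioc ⌊a⌋₊ ⌊b⌋₊, f k * c k - ∫ t in a..b, f t * g' t|
      = |f b * R b - f a * R a - ∫ t in a..b, f' t * R t| := by
        rw [sum_mul_eq_integral_add_sub_sub_integral ha hab hf hf' hg hg']
        congr 1
        ring
    _ ≤ |f b * R b| + |f a * R a| + |∫ t in a..b, f' t * R t| :=
        (abs_sub _ _).trans (by gcongr; exact abs_sub _ _)
    _ ≤ f b * K + f a * K + K * (f a - f b) := by
        rw [abs_mul, abs_mul, abs_of_nonneg hfa, abs_of_nonneg hfb]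
        gcongr
        exacts [hK b (Set.right_mem_Icc.2 hab), hK a (Set.left_mem_Icc.2 hab)]
    _ = 2 * K * f a := by ring

theorem abs_sum_inv_log_mul_sub_log_log_le (ha : 1 < a) (hab : a ≤ b)
    (hK : ∀ t ∈ Set.Icc a b, |∑ k ∈ Icc 0 ⌊t⌋₊, c k - log t| ≤ K) :
    |∑ k ∈ Ioc ⌊a⌋₊ ⌊b⌋₊, (log k)⁻¹ * c k - (log (log b) - log (log a))| ≤ 2 * K / log a := by
  have hpos : ∀ t ∈ Set.Icc a b, 0 < t := fun t ht ↦ by linarith [ht.1]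
  have hlog : ∀ t ∈ Set.Icc a b, 0 < log t := fun t ht ↦ Real.log_pos (ha.trans_le ht.1)
  have hinv : ContinuousOn (fun t : ℝ ↦ t⁻¹) (Set.Icc a b) :=
    continuousOn_inv₀.mono fun t ht ↦ (hpos t ht).ne'
  have hlogc : ContinuousOn log (Set.Icc a b) :=
    Real.continuousOn_log.mono fun t ht ↦ (hpos t ht).ne'
  have hderiv_cont : ContinuousOn (fun t ↦ -t⁻¹ / log t ^ 2) (Set.Icc a b) :=
    hinv.neg.div (hlogc.pow 2) fun t ht ↦ (pow_pos (hlog t ht) 2).ne'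
  have hint : ∫ t in a..b, (log t)⁻¹ * t⁻¹ = log (log b) - log (log a) := by
    rw [← Set.uIcc_of_le hab] at hpos hlog hinv hlogc
    refine intervalIntegral.integral_eq_sub_of_hasDerivAt (f := fun t ↦ log (log t))
      (fun t ht ↦ ?_) ((hlogc.inv₀ fun t ht ↦ (hlog t ht).ne').mul hinv).intervalIntegrable
    simpa only [div_eq_inv_mul] using (Real.hasDerivAt_log (hpos t ht).ne').log (hlog t ht).ne'
  rw [← hint, div_eq_mul_inv]
  refine abs_sum_mul_sub_integral_le (f := fun t ↦ (log t)⁻¹) (by linarith) hab (fun t ht ↦ ?_)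
    (hderiv_cont.intervalIntegrable_of_Icc hab) (fun t ht ↦ ?_)
    (inv_nonneg.2 (hlog b (Set.right_mem_Icc.2 hab)).le)
    (fun t ht ↦ Real.hasDerivAt_log (hpos t ht).ne') (hinv.intervalIntegrable_of_Icc hab) hK
  · exact (Real.hasDerivAt_log (hpos t ht).ne').inv (hlog t ht).ne'
  · exact div_nonpos_of_nonpos_of_nonneg (neg_nonpos.2 (inv_nonneg.2 (hpos t ht).le)) (sq_nonneg _)

end PartialSummation

theorem cauchySeq_of_eventually_dist_le {α β : Type*} [PseudoMetricSpace α] [Nonempty β]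
    [SemilatticeSup β] {u : β → α} {ε : β → ℝ}
    (hu : ∀ᶠ x in atTop, ∀ y, x ≤ y → dist (u x) (u y) ≤ ε x) (hε : Tendsto ε atTop (𝓝 0)) :
    CauchySeq u := by
  refine Metric.cauchySeq_iff'.2 fun δ hδ ↦ ?_
  obtain ⟨x, hux, hεx⟩ := (hu.and (hε.eventually_lt_const hδ)).exists
  exact ⟨x, fun y hy ↦ (dist_comm _ _).trans_lt ((hux y hy).trans_lt hεx)⟩

theorem log_factorial_eq_sum_primesLE (n : ℕ) :
    log (n)! = ∑ p ∈ primesLE n, ((n)!.factorization p : ℝ) * log p := by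
  rw [Real.log_nat_eq_sum_factorization]
  refine Finsupp.sum_of_support_subset _ (fun p hp ↦ ?_) _ (fun p _ ↦ by simp)
  obtain ⟨hprime, hdvd, -⟩ := Nat.mem_primeFactors.1 (Nat.support_factorization _ ▸ hp)
  exact mem_primesLE.2 ⟨hprime.dvd_factorial.1 hdvd, hprime⟩

theorem div_le_factorization_factorial {p : ℕ} (hp : p.Prime) (n : ℕ) :
    n / p ≤ (n)!.factorization p := by
  have hdvd : (p * (n / p))! ∣ (n)! := Nat.factorial_dvd_factorial (Nat.mul_div_le n p)
  have hle := (Nat.factorization_le_iff_dvd (Nat.factorial_ne_zero _) (Nat.factorial_ne_zero _)).2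
    hdvd p
  rw [Nat.factorization_factorial_mul hp] at hle
  exact le_of_add_le_right hle

theorem mul_sum_log_div_sub_theta_le_log_factorial (n : ℕ) :
    n * ∑ p ∈ primesLE n, log p / p - Chebyshev.theta n ≤ log (n)! := by
  rw [log_factorial_eq_sum_primesLE, Chebyshev.theta_eq_sum_primesLE_log, mul_sum,
    ← sum_sub_distrib]
  refine sum_le_sum fun p hp ↦ ?_
  have hfloor : (n : ℝ) / p - 1 ≤ (n / p : ℕ) := by
    rw [← Nat.floor_div_eq_div (K := ℝ)]
    exact (Nat.sub_one_lt_floor _).le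
  have hval : ((n / p : ℕ) : ℝ) ≤ (n)!.factorization p :=
    mod_cast div_le_factorization_factorial (Nat.prime_of_mem_primesLE hp) n
  calc n * (log p / p) - log p = (n / p - 1) * log p := by ring
    _ ≤ (n)!.factorization p * log p := by
      gcongr
      exact hfloor.trans hval

theorem log_factorial_le_mul_sum (n : ℕ) :
    log (n)! ≤ n * ∑ p ∈ primesLE n, (log p / p + log p / (p * (p - 1))) := by
  rw [log_factorial_eq_sum_primesLE, mul_sum]
  refine sum_le_sum fun p hp ↦ ?_
  have hprime := Nat.prime_of_mem_primesLE hp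
  have hp1 : (1 : ℝ) < p := mod_cast hprime.one_lt
  have hval : ((n)!.factorization p : ℝ) ≤ n / (p - 1) := calc
    ((n)!.factorization p : ℝ) ≤ (n / (p - 1) : ℕ) :=
      mod_cast Nat.factorization_factorial_le_div_pred hprime n
    _ ≤ n / ((p - 1 : ℕ) : ℝ) := Nat.cast_div_le
    _ = n / (p - 1) := by rw [Nat.cast_pred hprime.pos]
  calc ((n)!.factorization p : ℝ) * log p ≤ n / (p - 1) * log p := by
        gcongr
    _ = n * (log p / p + log p / (p * (p - 1))) := by
        have := sub_ne_zero.2 hp1.ne'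
        field_simp
        ring

theorem log_div_mul_sub_one_le {x : ℝ} (hx : 2 ≤ x) :
    log x / (x * (x - 1)) ≤ 4 * (x ^ (3 / 2 : ℝ))⁻¹ := by
  have hx0 : 0 < x := by linarith
  have hlog : log x ≤ 2 * x ^ (1 / 2 : ℝ) := by
    linarith [Real.log_le_rpow_div hx0.le (ε := 1 / 2) (by norm_num)]
  have hsplit : x ^ 2 = x ^ (1 / 2 : ℝ) * x ^ (3 / 2 : ℝ) := by
    rw [← Real.rpow_add hx0]
    norm_num
  calc log x / (x * (x - 1)) ≤ 2 * x ^ (1 / 2 : ℝ) / (x ^ 2 / 2) := by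
        gcongr
        nlinarith
    _ = 4 * (x ^ (3 / 2 : ℝ))⁻¹ := by
        rw [hsplit]
        field_simp
        norm_num

theorem summable_log_div_mul_sub_one :
    Summable fun n : ℕ ↦ log n / (n * (n - 1) : ℝ) := by
  refine Summable.of_norm_bounded_eventually_nat
    ((Real.summable_nat_rpow_inv.2 (by norm_num : (1 : ℝ) < 3 / 2)).mul_left 4) ?_
  filter_upwards [eventually_ge_atTop 2] with n hn
  have hn' : (2 : ℝ) ≤ n := mod_cast hn
  rw [Real.norm_of_nonneg (div_nonneg (Real.log_natCast_nonneg n) (by nlinarith))]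
  exact log_div_mul_sub_one_le hn'

theorem sum_log_div_primesLE_le {n : ℕ} (hn : n ≠ 0) :
    ∑ p ∈ primesLE n, log p / p ≤ log n + log 4 := by
  have hn0 : (0 : ℝ) < n := by positivity
  have hfact : log (n)! ≤ n * log n := by
    rw [← Real.log_pow]
    exact Real.log_le_log (by positivity) (mod_cast Nat.factorial_le_pow n)
  have htheta := Chebyshev.theta_le_log4_mul_x hn0.le
  refine le_of_mul_le_mul_left ?_ hn0
  linarith [mul_sum_log_div_sub_theta_le_log_factorial n]

theorem log_sub_le_sum_log_div_primesLE {n : ℕ} (hn : n ≠ 0) :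
    log n - (1 + ∑' k : ℕ, log k / (k * (k - 1) : ℝ)) ≤ ∑ p ∈ primesLE n, log p / p := by
  have hn0 : (0 : ℝ) < n := by positivity
  have hstirling : n * log n - n ≤ log (n)! := by
    have := Stirling.le_log_factorial_stirling hn
    have := Real.log_natCast_nonneg n
    have : 0 ≤ log (2 * Real.pi) := Real.log_nonneg (by linarith [Real.pi_gt_three])
    linarith
  have htsum : ∑ p ∈ primesLE n, log p / (p * (p - 1) : ℝ) ≤
      ∑' k : ℕ, log k / (k * (k - 1) : ℝ) := by
    refine summable_log_div_mul_sub_one.sum_le_tsum _ fun k _ ↦ ?_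
    rcases k.eq_zero_or_pos with rfl | hk
    · simp
    · have : (1 : ℝ) ≤ k := mod_cast hk
      exact div_nonneg (Real.log_nonneg this) (mul_nonneg k.cast_nonneg (sub_nonneg.2 this))
  have hfact := log_factorial_le_mul_sum n
  rw [sum_add_distrib] at hfact
  have hdiv : log n - 1 ≤ ∑ p ∈ primesLE n, log p / p +
      ∑ p ∈ primesLE n, log p / (p * (p - 1) : ℝ) :=
    le_of_mul_le_mul_left (by linarith) hn0
  linarith

theorem exists_abs_sum_log_div_primesLE_sub_log_le :
    ∃ K, ∀ x : ℝ, 1 ≤ x → |∑ p ∈ primesLE ⌊x⌋₊, log p / p - log x| ≤ K := by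
  set T := ∑' k : ℕ, log k / (k * (k - 1) : ℝ)
  refine ⟨max (log 4) (log 2 + (1 + T)), fun x hx ↦ ?_⟩
  have hfloor : 1 ≤ ⌊x⌋₊ := Nat.one_le_floor_iff x |>.2 hx
  have hfloor' : (1 : ℝ) ≤ ⌊x⌋₊ := mod_cast hfloor
  have hlog_floor_le : log ⌊x⌋₊ ≤ log x :=
    Real.log_le_log (by linarith) (Nat.floor_le (by linarith))
  have hlog_le : log x ≤ log 2 + log ⌊x⌋₊ := by
    rw [← Real.log_mul (by norm_num) (by linarith)]
    exact Real.log_le_log (by linarith) (by linarith [Nat.lt_floor_add_one x])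
  have hupper := sum_log_div_primesLE_le (Nat.one_le_iff_ne_zero.1 hfloor)
  have hlower := log_sub_le_sum_log_div_primesLE (Nat.one_le_iff_ne_zero.1 hfloor)
  rw [abs_le]
  constructor
  · linarith [le_max_right (log 4) (log 2 + (1 + T))]
  · linarith [le_max_left (log 4) (log 2 + (1 + T))]

theorem exists_abs_sum_inv_primes_Ioc_sub_log_log_le :
    ∃ K ≥ 0, ∀ x y : ℝ, 1 < x → x ≤ y →
      |∑ p ∈ Ioc ⌊x⌋₊ ⌊y⌋₊ with p.Prime, (1 : ℝ) / p - (log (log y) - log (log x))| ≤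
        K / log x := by
  obtain ⟨K, hK⟩ := exists_abs_sum_log_div_primesLE_sub_log_le
  have hK0 : 0 ≤ K := (abs_nonneg _).trans (hK 1 le_rfl)
  refine ⟨2 * K, by positivity, fun x y hx hxy ↦ ?_⟩
  set c : ℕ → ℝ := fun k ↦ if k.Prime then log k / k else 0
  have hterm (k : ℕ) : (log k)⁻¹ * c k = if k.Prime then (1 : ℝ) / k else 0 := by
    by_cases hk : k.Prime
    · have : log k ≠ 0 := (Real.log_pos (mod_cast hk.one_lt)).ne'
      simp only [c, hk, if_true]
      field_simp
    · simp only [c, hk, if_false, mul_zero]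
  rw [sum_filter, ← sum_congr rfl fun k _ ↦ hterm k]
  refine abs_sum_inv_log_mul_sub_log_log_le hx hxy fun t ht ↦ ?_
  rw [← sum_filter, ← Nat.primesLE_eq_filter_Icc_zero]
  exact hK t (hx.le.trans ht.1)

/-- The Mertens constant `B₁`, the limit of `∑_{p ≤ x} 1 / p - log log x` as `x → ∞`. It is encoded
by `limUnder`, which is meaningful because of `tendsto_sum_inv_primesLE_sub_log_log`. -/
noncomputable def mertensConstant : ℝ :=
  limUnder atTop fun x : ℝ ↦ ∑ p ∈ primesLE ⌊x⌋₊, (1 : ℝ) / p - log (log x)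

theorem exists_abs_sum_inv_primesLE_sub_sub_le :
    ∃ K ≥ 0, ∀ x y : ℝ, 1 < x → x ≤ y →
      |(∑ p ∈ primesLE ⌊x⌋₊, (1 : ℝ) / p - log (log x)) -
        (∑ p ∈ primesLE ⌊y⌋₊, (1 : ℝ) / p - log (log y))| ≤ K / log x := by
  obtain ⟨K, hK0, hK⟩ := exists_abs_sum_inv_primes_Ioc_sub_log_log_le
  refine ⟨K, hK0, fun x y hx hxy ↦ ?_⟩
  have hsplit : ∑ p ∈ primesLE ⌊x⌋₊, (1 : ℝ) / p +
      ∑ p ∈ Ioc ⌊x⌋₊ ⌊y⌋₊ with p.Prime, (1 : ℝ) / p = ∑ p ∈ primesLE ⌊y⌋₊, (1 : ℝ) / p := by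
    simp only [Nat.primesLE_eq_filter_Ioc_zero, sum_filter]
    exact sum_Ioc_consecutive _ (Nat.zero_le _) (Nat.floor_le_floor hxy)
  have h := hK x y hx hxy
  rw [abs_sub_comm, ← hsplit]
  convert h using 2
  ring

theorem tendsto_sum_inv_primesLE_sub_log_log :
    Tendsto (fun x : ℝ ↦ ∑ p ∈ primesLE ⌊x⌋₊, (1 : ℝ) / p - log (log x)) atTop
      (𝓝 mertensConstant) := by
  obtain ⟨K, -, hK⟩ := exists_abs_sum_inv_primesLE_sub_sub_le
  refine CauchySeq.tendsto_limUnder (cauchySeq_of_eventually_dist_le ?_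
    (Real.tendsto_log_atTop.const_div_atTop K))
  filter_upwards [eventually_gt_atTop 1] with x hx y hxy using hK x y hx hxy

theorem exists_abs_sum_inv_primesLE_sub_log_log_sub_mertensConstant_le :
    ∃ K ≥ 0, ∀ x : ℝ, 1 < x →
      |∑ p ∈ primesLE ⌊x⌋₊, (1 : ℝ) / p - log (log x) - mertensConstant| ≤ K / log x := by
  obtain ⟨K, hK0, hK⟩ := exists_abs_sum_inv_primesLE_sub_sub_le
  refine ⟨K, hK0, fun x hx ↦ ?_⟩
  refine le_of_tendsto (tendsto_sum_inv_primesLE_sub_log_log.const_sub _).abs ?_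
  filter_upwards [eventually_ge_atTop x] with y hxy using hK x y hx hxy

theorem sum_sum_primeFactors {M : Type*} [AddCommMonoid M] (f : ℕ → M) (N : ℕ) :
    ∑ n ∈ Icc 1 N, ∑ p ∈ n.primeFactors, f p = ∑ p ∈ primesLE N, (N / p) • f p := by
  calc ∑ n ∈ Icc 1 N, ∑ p ∈ n.primeFactors, f p
      = ∑ p ∈ primesLE N, ∑ n ∈ Ioc 0 N with p ∣ n, f p := by
        refine sum_comm' fun n p ↦ ?_
        simp only [mem_Icc, Nat.mem_primeFactors, mem_filter, mem_Ioc, mem_primesLE]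
        constructor
        · rintro ⟨⟨hn, hnN⟩, hp, hpn, -⟩
          exact ⟨⟨⟨hn, hnN⟩, hpn⟩, (Nat.le_of_dvd hn hpn).trans hnN, hp⟩
        · rintro ⟨⟨⟨hn, hnN⟩, hpn⟩, -, hp⟩
          exact ⟨⟨hn, hnN⟩, hp, hpn, hn.ne'⟩
    _ = ∑ p ∈ primesLE N, (N / p) • f p := by
        simp only [sum_const, Nat.Ioc_filter_dvd_card_eq_div]

theorem primeCounting_floor_le {x : ℝ} (hx : 1 < x) :
    (primeCounting ⌊x⌋₊ : ℝ) ≤ (2 * log 4 + 2) * x / log x := by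
  have hx0 : 0 ≤ x := by linarith
  have hlog : 0 < log x := Real.log_pos hx
  have hlog_sqrt : log √x = log x / 2 := Real.log_sqrt hx0
  have hsqrt : √x ≤ 2 * x / log x := by
    rw [le_div_iff₀ hlog]
    have hle : log √x ≤ √x := Real.log_le_self (Real.sqrt_nonneg x)
    nlinarith [Real.sqrt_nonneg x, Real.mul_self_sqrt hx0]
  calc (primeCounting ⌊x⌋₊ : ℝ) ≤ log 4 * x / log √x + √x := Chebyshev.pi_le_log4_mul_div hx
    _ ≤ log 4 * x / (log x / 2) + 2 * x / log x := by rw [hlog_sqrt]; gcongr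
    _ = (2 * log 4 + 2) * x / log x := by field_simp

theorem abs_sum_card_primeFactors_sub_le {x : ℝ} (hx : 0 ≤ x) :
    |∑ n ∈ Icc 1 ⌊x⌋₊, (#n.primeFactors : ℝ) - x * ∑ p ∈ primesLE ⌊x⌋₊, (1 : ℝ) / p| ≤
      primeCounting ⌊x⌋₊ := by
  have hswap : ∑ n ∈ Icc 1 ⌊x⌋₊, (#n.primeFactors : ℝ) = ∑ p ∈ primesLE ⌊x⌋₊, (⌊x / p⌋₊ : ℝ) := by
    simpa [Nat.floor_div_natCast] using sum_sum_primeFactors (fun _ ↦ (1 : ℝ)) ⌊x⌋₊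
  rw [hswap, mul_sum, ← sum_sub_distrib]
  calc |∑ p ∈ primesLE ⌊x⌋₊, ((⌊x / p⌋₊ : ℝ) - x * (1 / p))|
      ≤ ∑ p ∈ primesLE ⌊x⌋₊, |(⌊x / p⌋₊ : ℝ) - x * (1 / p)| := abs_sum_le_sum_abs _ _
    _ ≤ ∑ p ∈ primesLE ⌊x⌋₊, 1 := sum_le_sum fun p _ ↦ by
        rw [mul_one_div]
        exact Nat.abs_floor_sub_le (by positivity)
    _ = primeCounting ⌊x⌋₊ := by simp

/-- There exist the Mertens constant `B₁ = lim_{x→∞} (∑_{p ≤ x} 1/p - log log x)` and a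
constant `C > 0` such that for all `x ≥ 3`,
`|∑_{n ≤ x} ω(n) - (x log log x + B₁ x)| ≤ C x / log x`. -/
theorem average_order_of_omega :
    ∃ B₁ : ℝ,
      Filter.Tendsto
        (fun x : ℝ =>
          (∑ p ∈ (Finset.Icc 1 ⌊x⌋₊).filter Nat.Prime, (1 : ℝ) / p) -
            Real.log (Real.log x))
        Filter.atTop (nhds B₁) ∧
      ∃ C : ℝ, 0 < C ∧ ∀ x : ℝ, 3 ≤ x →
        |(∑ n ∈ Finset.Icc 1 ⌊x⌋₊, (n.primeFactors.card : ℝ)) -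
            (x * Real.log (Real.log x) + B₁ * x)| ≤ C * x / Real.log x := by
  simp only [← Nat.primesLE_eq_filter_Icc_one]
  obtain ⟨K, hK0, hK⟩ := exists_abs_sum_inv_primesLE_sub_log_log_sub_mertensConstant_le
  refine ⟨mertensConstant, tendsto_sum_inv_primesLE_sub_log_log, 2 * log 4 + 2 + K,
    by positivity, fun x hx ↦ ?_⟩
  have hx0 : 0 ≤ x := by linarith
  have hx1 : 1 < x := by linarith
  set W := ∑ n ∈ Icc 1 ⌊x⌋₊, (#n.primeFactors : ℝ)
  set S := ∑ p ∈ primesLE ⌊x⌋₊, (1 : ℝ) / p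
  calc |W - (x * log (log x) + mertensConstant * x)|
      = |(W - x * S) + x * (S - log (log x) - mertensConstant)| := by congr 1; ring
    _ ≤ |W - x * S| + x * |S - log (log x) - mertensConstant| :=
        (abs_add_le _ _).trans_eq (by rw [abs_mul, abs_of_nonneg hx0])
    _ ≤ (2 * log 4 + 2) * x / log x + x * (K / log x) := by
        gcongr
        exacts [(abs_sum_card_primeFactors_sub_le hx0).trans (primeCounting_floor_le hx1), hK x hx1]
    _ = (2 * log 4 + 2 + K) * x / log x := by ring
end
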